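/- arXiv:math/0607286 — 2 statements merged into one kernel-verified Lean document; each statement's English description precedes it below -/
import Mathlib

section
/- The number of lattice points of a Gorenstein simplicial cone at each level is a sum of binomial coefficients indexed by the box: assuming d ≥ 1, for every natural number j, the cardinality of {v ∈ σ ∩ ℤⁿ : f(v) = j} equals the sum, over all b ∈ Box(σ) with f(b) ≤ j, of the binomial coefficient C(j − f(b) + d − 1, d − 1). -/
/-- The canonical embedding of `ℤⁿ` into `ℝⁿ`. -/
noncomputable def toR (n : ℕ) (w : Fin n → ℤ) : Fin n → ℝ := fun k => (w k : ℝ)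

/-- The simplicial cone generated by the lattice vectors `v 0, …, v (d-1)`. -/
noncomputable def Cone (n d : ℕ) (v : Fin d → Fin n → ℤ) : Set (Fin n → ℝ) :=
  {x | ∃ α : Fin d → ℝ, (∀ i, 0 ≤ α i) ∧ x = ∑ i, α i • toR n (v i)}

/-- The box of the simplicial cone generated by `v 0, …, v (d-1)`. -/
noncomputable def Box (n d : ℕ) (v : Fin d → Fin n → ℤ) : Set (Fin n → ℤ) :=
  {w | ∃ α : Fin d → ℝ, (∀ i, 0 ≤ α i ∧ α i < 1) ∧ toR n w = ∑ i, α i • toR n (v i)}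

/-- The embedding of a lattice vector shifted by natural multiples of the generators. -/
lemma toR_shift (n d : ℕ) (v : Fin d → Fin n → ℤ) (b : Fin n → ℤ) (c : Fin d → ℕ) :
    toR n (b + ∑ i, (c i : ℤ) • v i) = toR n b + ∑ i, (c i : ℝ) • toR n (v i) := by
  funext k
  simp [toR, Finset.sum_apply]

lemma box_finite (n d : ℕ) (v : Fin d → Fin n → ℤ) : (Box n d v).Finite := by
  apply (Set.finite_Icc (fun k => -∑ i, |v i k|) (fun k => ∑ i, |v i k|)).subset
  rintro w ⟨α, hα, hw⟩
  have key : ∀ k, |w k| ≤ ∑ i, |v i k| := by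
    intro k
    have h := congrFun hw k
    simp only [toR, Finset.sum_apply, Pi.smul_apply, smul_eq_mul] at h
    have : |(w k : ℝ)| ≤ ∑ i, |(v i k : ℝ)| := by
      rw [h]
      refine (Finset.abs_sum_le_sum_abs _ _).trans (Finset.sum_le_sum fun i _ => ?_)
      rw [abs_mul, abs_of_nonneg (hα i).1]
      exact mul_le_of_le_one_left (abs_nonneg _) (hα i).2.le
    exact_mod_cast this
  exact ⟨fun k => (abs_le.1 (key k)).1, fun k => (abs_le.1 (key k)).2⟩

lemma coeff_unique (n d : ℕ) (v : Fin d → Fin n → ℤ)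
    (hli : LinearIndependent ℝ (fun i => toR n (v i))) (α β : Fin d → ℝ)
    (h : ∑ i, α i • toR n (v i) = ∑ i, β i • toR n (v i)) : α = β := by
  funext i
  have := Fintype.linearIndependent_iff.1 hli (fun i => α i - β i)
    (by simp only [sub_smul, Finset.sum_sub_distrib, h, sub_self]) i
  linarith

lemma f_comb (n d : ℕ) (v : Fin d → Fin n → ℤ) (f : (Fin n → ℝ) →ₗ[ℝ] ℝ)
    (hf1 : ∀ i, f (toR n (v i)) = 1) (α : Fin d → ℝ) :
    f (∑ i, α i • toR n (v i)) = ∑ i, α i := by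
  simp [map_sum, hf1]

/-- The number of lattice points of a Gorenstein simplicial cone at level `j` is the sum,
over the box elements `b` with `f b ≤ j`, of the binomial coefficients
`C(j - f b + d - 1, d - 1)`.  (Box elements are encoded as pairs `(b, m)` with
`m : ℕ` the value of the Gorenstein function at `b`.) -/
theorem graded_piece_card (n d : ℕ) (hd : 1 ≤ d) (v : Fin d → Fin n → ℤ)
    (hli : LinearIndependent ℝ (fun i => toR n (v i)))
    (f : (Fin n → ℝ) →ₗ[ℝ] ℝ)
    (hf1 : ∀ i, f (toR n (v i)) = 1)
    (hfint : ∀ w : Fin n → ℤ, toR n w ∈ Cone n d v → ∃ k : ℤ, f (toR n w) = k)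
    (j : ℕ) :
    {w : Fin n → ℤ | toR n w ∈ Cone n d v ∧ f (toR n w) = j}.ncard =
      ∑ᶠ p ∈ {p : (Fin n → ℤ) × ℕ | p.1 ∈ Box n d v ∧ f (toR n p.1) = p.2 ∧ p.2 ≤ j},
        Nat.choose (j - p.2 + d - 1) (d - 1) := by
  classical
  set B := {p : (Fin n → ℤ) × ℕ | p.1 ∈ Box n d v ∧ f (toR n p.1) = p.2 ∧ p.2 ≤ j} with hB
  have hBfin : B.Finite := by
    apply ((box_finite n d v).prod (Set.finite_Iic j)).subset
    rintro p ⟨h1, -, h3⟩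
    exact ⟨h1, h3⟩
  rw [finsum_mem_eq_finite_toFinset_sum _ hBfin]
  let T : Finset (Σ _ : (Fin n → ℤ) × ℕ, Fin d → ℕ) :=
    hBfin.toFinset.sigma (fun p => Finset.piAntidiag Finset.univ (j - p.2))
  let g : (Σ _ : (Fin n → ℤ) × ℕ, Fin d → ℕ) → Fin n → ℤ :=
    fun q => q.1.1 + ∑ i, (q.2 i : ℤ) • v i
  have hT : ∀ q, q ∈ T ↔ q.1 ∈ B ∧ ∑ i, q.2 i = j - q.1.2 := by
    intro q
    simp [T, Finset.mem_sigma, Finset.mem_piAntidiag]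
  have hS : {w : Fin n → ℤ | toR n w ∈ Cone n d v ∧ f (toR n w) = j} = Set.image g (T : Set _) := by
    ext w
    constructor
    · rintro ⟨⟨α, hα, hw⟩, hfw⟩
      let c : Fin d → ℕ := fun i => ⌊α i⌋₊
      let b : Fin n → ℤ := w - ∑ i, (c i : ℤ) • v i
      have hwb : b + ∑ i, (c i : ℤ) • v i = w := by simp [b]
      have hb : toR n b = ∑ i, (α i - c i) • toR n (v i) := by
        have h := toR_shift n d v b c
        rw [hwb, hw] at h
        simp only [sub_smul, Finset.sum_sub_distrib]
        rw [h]; abel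
      have hbox : ∀ i, 0 ≤ α i - c i ∧ α i - c i < 1 := fun i =>
        ⟨sub_nonneg.2 (Nat.floor_le (hα i)), by
          have := Nat.lt_floor_add_one (α i)
          simp only [c]; linarith⟩
      obtain ⟨k, hk⟩ := hfint b ⟨_, fun i => (hbox i).1, hb⟩
      have hfb : f (toR n b) = ∑ i, (α i - c i) := by rw [hb, f_comb n d v f hf1]
      have hk0 : 0 ≤ k := by
        have : (0 : ℝ) ≤ k := by
          rw [← hk, hfb]; exact Finset.sum_nonneg fun i _ => (hbox i).1
        exact_mod_cast this
      obtain ⟨m, rfl⟩ := Int.eq_ofNat_of_zero_le hk0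
      have hα' : ∑ i, α i = j := by rw [← hfw, hw, f_comb n d v f hf1]
      have hsum : m + ∑ i, c i = j := by
        have : (m : ℝ) + ∑ i, (c i : ℝ) = j := by
          rw [hk, Finset.sum_sub_distrib, hα'] at hfb
          push_cast at hfb
          linarith
        exact_mod_cast this
      refine ⟨⟨(b, m), c⟩, ?_, hwb⟩
      rw [Finset.mem_coe, hT]
      refine ⟨⟨⟨_, hbox, hb⟩, by simpa using hk, by simp only; omega⟩, by simp only; omega⟩
    · rintro ⟨⟨⟨b, m⟩, c⟩, hq, rfl⟩
      rw [Finset.mem_coe, hT] at hq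
      obtain ⟨⟨⟨α, hα, hb⟩, hfb, hm⟩, hc⟩ := hq
      simp only at hb hfb hm hc
      have h := toR_shift n d v b c
      have h2 : toR n (b + ∑ i, (c i : ℤ) • v i) = ∑ i, (α i + c i) • toR n (v i) := by
        rw [h, hb]; simp only [add_smul, Finset.sum_add_distrib]
      refine ⟨⟨_, fun i => add_nonneg (hα i).1 (Nat.cast_nonneg _), h2⟩, ?_⟩
      simp only [g]
      rw [h, map_add, hfb, f_comb n d v f hf1]
      have : m + ∑ i, c i = j := by omega
      exact_mod_cast this
  have hinj : Set.InjOn g (T : Set _) := by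
    rintro ⟨⟨b, m⟩, c⟩ hq ⟨⟨b', m'⟩, c'⟩ hq' he
    rw [Finset.mem_coe, hT] at hq hq'
    obtain ⟨⟨⟨α, hα, hb⟩, hfb, -⟩, -⟩ := hq
    obtain ⟨⟨⟨α', hα', hb'⟩, hfb', -⟩, -⟩ := hq'
    simp only [g] at hb hfb hb' hfb' he
    have h : ∑ i, (α i + c i) • toR n (v i) = ∑ i, (α' i + c' i) • toR n (v i) := by
      have h1 := toR_shift n d v b c
      have h2 := toR_shift n d v b' c'
      rw [he, h2, hb, hb'] at h1
      simp only [add_smul, Finset.sum_add_distrib]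
      exact h1.symm
    have h := coeff_unique n d v hli _ _ h
    have hcc : c = c' := by
      funext i
      have hi := congrFun h i
      have h1 := hα i
      have h2 := hα' i
      have l1 : (c i : ℝ) < c' i + 1 := by linarith
      have l2 : (c' i : ℝ) < c i + 1 := by linarith
      have l1' : c i < c' i + 1 := by exact_mod_cast l1
      have l2' : c' i < c i + 1 := by exact_mod_cast l2
      omega
    subst hcc
    have hbb : b = b' := add_right_cancel he
    subst hbb
    have hmm : m = m' := by
      rw [hfb] at hfb'; exact_mod_cast hfb'
    subst hmm
    rfl
  rw [hS, hinj.ncard_image, Set.ncard_coe_finset, Finset.card_sigma]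
  refine Finset.sum_congr rfl fun p _ => ?_
  rw [← Finset.map_sym_eq_piAntidiag, Finset.card_map, Finset.sym_univ, Finset.card_univ,
    Sym.card_sym_eq_choose, Fintype.card_fin]
  rw [← Nat.choose_symm (by omega)]
  congr 1 <;> omega
end

section
/- The lattice-point generating function of a Gorenstein simplicial cone equals the box polynomial divided by (1−t)^d: in the ring of formal power series ℤ⟦t⟧, (1 − t)^d · Σ_{j≥0} #{v ∈ σ ∩ ℤⁿ : f(v) = j} · t^j = Σ_{b ∈ Box(σ)} t^{f(b)}. -/
/-- Lattice points of the cone of height `j` whose coefficients indexed by `s` are `< 1`. -/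
def LatPts (n d : ℕ) (v : Fin d → Fin n → ℤ) (s : Finset (Fin d)) (j : ℕ) : Set (Fin n → ℤ) :=
  {w | ∃ α : Fin d → ℝ, (∀ i, 0 ≤ α i) ∧ (∀ i ∈ s, α i < 1) ∧
    toR n w = ∑ i, α i • toR n (v i) ∧ ∑ i, α i = j}

lemma LatPts_finite (n d : ℕ) (v : Fin d → Fin n → ℤ) (s : Finset (Fin d)) (j : ℕ) :
    (LatPts n d v s j).Finite := by
  apply (Set.finite_Icc (fun k => -(∑ i, (j : ℤ) * |v i k|)) (fun k => ∑ i, (j : ℤ) * |v i k|)).subset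
  rintro w ⟨α, h0, -, hw, hs⟩
  have key : ∀ k, |w k| ≤ ∑ i, (j : ℤ) * |v i k| := by
    intro k
    have h := congrFun hw k
    simp only [toR, Finset.sum_apply, Pi.smul_apply, smul_eq_mul] at h
    have : |(w k : ℝ)| ≤ ∑ i, (j : ℝ) * |(v i k : ℝ)| := by
      rw [h]
      refine (Finset.abs_sum_le_sum_abs _ _).trans (Finset.sum_le_sum fun i _ => ?_)
      rw [abs_mul, abs_of_nonneg (h0 i)]
      refine mul_le_mul_of_nonneg_right ?_ (abs_nonneg _)
      rw [← hs]
      exact Finset.single_le_sum (fun i _ => h0 i) (Finset.mem_univ i)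
    exact_mod_cast this
  exact ⟨fun k => (abs_le.1 (key k)).1, fun k => (abs_le.1 (key k)).2⟩

lemma toR_add (n : ℕ) (a b : Fin n → ℤ) : toR n (a + b) = toR n a + toR n b := by
  ext k; simp [toR]

lemma LatPts_zero (n d : ℕ) (v : Fin d → Fin n → ℤ) (s : Finset (Fin d)) (a : Fin d) :
    LatPts n d v (insert a s) 0 = LatPts n d v s 0 := by
  ext w
  constructor
  · rintro ⟨α, h0, h1, h⟩
    exact ⟨α, h0, fun i hi => h1 i (Finset.mem_insert_of_mem hi), h⟩
  · rintro ⟨α, h0, h1, hw, hs⟩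
    refine ⟨α, h0, fun i _ => ?_, hw, hs⟩
    have := Finset.single_le_sum (fun i _ => h0 i) (Finset.mem_univ i)
    rw [hs] at this
    push_cast at this
    linarith

lemma sum_shift {d n : ℕ} (v : Fin d → Fin n → ℤ) (α : Fin d → ℝ) (a : Fin d) (c : ℝ) :
    ∑ i, (α i + if i = a then c else 0) • toR n (v i) =
      ∑ i, α i • toR n (v i) + c • toR n (v a) := by
  simp [add_smul, Finset.sum_add_distrib, ite_smul]

lemma LatPts_succ (n d : ℕ) (v : Fin d → Fin n → ℤ) (s : Finset (Fin d)) (a : Fin d) (ha : a ∉ s)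
    (j : ℕ) :
    LatPts n d v s (j+1) = LatPts n d v (insert a s) (j+1) ∪ (fun w => w + v a) '' LatPts n d v s j := by
  ext w
  constructor
  · rintro ⟨α, h0, h1, hw, hs⟩
    by_cases hlt : α a < 1
    · left
      refine ⟨α, h0, fun i hi => ?_, hw, hs⟩
      rcases Finset.mem_insert.1 hi with rfl | hi
      · exact hlt
      · exact h1 i hi
    · right
      refine ⟨w - v a, ⟨fun i => α i + if i = a then -1 else 0, fun i => ?_, fun i hi => ?_, ?_, ?_⟩,
        by simp⟩
      · dsimp only
        split_ifs with h
        · subst h; linarith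
        · simpa using h0 i
      · have : i ≠ a := fun h => ha (h ▸ hi)
        simpa [this] using h1 i hi
      · rw [sum_shift, ← hw]
        ext k; simp [toR]; ring
      · rw [Finset.sum_add_distrib, hs]; simp
  · rintro (⟨α, h0, h1, h⟩ | ⟨w, ⟨α, h0, h1, hw, hs⟩, rfl⟩)
    · exact ⟨α, h0, fun i hi => h1 i (Finset.mem_insert_of_mem hi), h⟩
    · refine ⟨fun i => α i + if i = a then 1 else 0, fun i => ?_, fun i hi => ?_, ?_, ?_⟩
      · have := h0 i
        dsimp only
        split_ifs <;> linarith
      · have : i ≠ a := fun h => ha (h ▸ hi)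
        simpa [this] using h1 i hi
      · rw [sum_shift, ← hw, toR_add, one_smul]
      · rw [Finset.sum_add_distrib, hs]; simp

lemma LatPts_disj (n d : ℕ) (v : Fin d → Fin n → ℤ)
    (hli : LinearIndependent ℝ (fun i => toR n (v i))) (s : Finset (Fin d)) (a : Fin d)
    (j : ℕ) :
    Disjoint (LatPts n d v (insert a s) (j+1)) ((fun w => w + v a) '' LatPts n d v s j) := by
  rw [Set.disjoint_left]
  rintro _ ⟨β, g0, g1, hw', -⟩ ⟨w, ⟨α, h0, h1, hw, hs⟩, rfl⟩
  have e : ∑ i, β i • toR n (v i) = ∑ i, (α i + if i = a then 1 else 0) • toR n (v i) := by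
    rw [sum_shift, ← hw, ← hw', toR_add, one_smul]
  have h2 : ∑ i, (β i - (α i + if i = a then 1 else 0)) • toR n (v i) = 0 := by
    simp only [sub_smul, Finset.sum_sub_distrib]
    rw [e, sub_self]
  have h3 := Fintype.linearIndependent_iff.1 hli _ h2 a
  have h4 := g1 a (Finset.mem_insert_self _ _)
  have h5 := h0 a
  simp at h3
  linarith

lemma LatPts_series (n d : ℕ) (v : Fin d → Fin n → ℤ)
    (hli : LinearIndependent ℝ (fun i => toR n (v i))) (s : Finset (Fin d)) :
    (1 - PowerSeries.X : PowerSeries ℤ) ^ s.card *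
      PowerSeries.mk (fun j => ((LatPts n d v ∅ j).ncard : ℤ)) =
    PowerSeries.mk (fun j => ((LatPts n d v s j).ncard : ℤ)) := by
  induction s using Finset.induction_on with
  | empty => simp
  | insert a s ha ih =>
    rw [Finset.card_insert_of_notMem ha, pow_succ', mul_assoc, ih]
    ext j
    rw [sub_mul, one_mul, map_sub]
    cases j with
    | zero => simp [LatPts_zero]
    | succ j =>
      rw [PowerSeries.coeff_succ_X_mul]
      simp only [PowerSeries.coeff_mk]
      rw [LatPts_succ n d v s a ha j, Set.ncard_union_eq (LatPts_disj n d v hli s a j)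
        (LatPts_finite _ _ _ _ _) ((LatPts_finite _ _ _ _ _).image _),
        Set.ncard_image_of_injective _ (add_left_injective (v a))]
      push_cast; ring

/-- The lattice-point generating function of a Gorenstein simplicial cone equals the box
polynomial divided by `(1 - t)^d`: in `ℤ⟦t⟧`,
`(1 - t)^d * ∑ⱼ #{v ∈ σ ∩ ℤⁿ : f v = j} tʲ = ∑_{b ∈ Box σ} t^{f b}`,
where the right-hand side is the power series whose `j`-th coefficient is
`#{b ∈ Box σ : f b = j}`. -/
theorem ehrhart_series_eq_box_polynomial (n d : ℕ) (v : Fin d → Fin n → ℤ)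
    (hli : LinearIndependent ℝ (fun i => toR n (v i)))
    (f : (Fin n → ℝ) →ₗ[ℝ] ℝ)
    (hf1 : ∀ i, f (toR n (v i)) = 1)
    (hfint : ∀ w : Fin n → ℤ, toR n w ∈ Cone n d v → ∃ k : ℤ, f (toR n w) = k) :
    (1 - PowerSeries.X : PowerSeries ℤ) ^ d *
      PowerSeries.mk (fun j =>
        ({w : Fin n → ℤ | toR n w ∈ Cone n d v ∧ f (toR n w) = j}.ncard : ℤ)) =
    PowerSeries.mk (fun j =>
        ({b ∈ Box n d v | f (toR n b) = j}.ncard : ℤ)) := by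
  have hf : ∀ α : Fin d → ℝ, f (∑ i, α i • toR n (v i)) = ∑ i, α i := by
    intro α; simp [hf1]
  have h := LatPts_series n d v hli Finset.univ
  rw [Finset.card_univ, Fintype.card_fin] at h
  convert h using 6 with j j
  · ext w
    constructor
    · rintro ⟨⟨α, h0, hw⟩, hj⟩
      exact ⟨α, h0, by simp, hw, by rw [← hf, ← hw, hj]⟩
    · rintro ⟨α, h0, -, hw, hs⟩
      exact ⟨⟨α, h0, hw⟩, by rw [hw, hf, hs]⟩
  · ext w
    constructor
    · rintro ⟨⟨α, h0, hw⟩, hj⟩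
      exact ⟨α, fun i => (h0 i).1, fun i _ => (h0 i).2, hw, by rw [← hf, ← hw, hj]⟩
    · rintro ⟨α, h0, h1, hw, hs⟩
      exact ⟨⟨α, fun i => ⟨h0 i, h1 i (Finset.mem_univ i)⟩, hw⟩, by rw [hw, hf, hs]⟩
end
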